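/- arXiv:1102.2326 — 6 statements merged into one kernel-verified Lean document; each statement's English description precedes it below -/
import Mathlib

section
/- Let Γ : ℝ × ℝ → (0, ∞) be continuously differentiable and suppose it satisfies the permutation functional equation Γ(ε₁, M) · Γ(ε₂, M − ε₁) = Γ(ε₂, M) · Γ(ε₁, M − ε₂) for all real ε₁, ε₂, M. Then there exist continuously differentiable functions f : ℝ → ℝ and h : ℝ → ℝ such that Γ(ε, M) = exp(f(M − ε) − f(M) + h(ε)) for all real ε, M. -/
/-- **Theorem 1 (necessity direction).**
If `Γ : ℝ × ℝ → (0, ∞)` is continuously differentiable and satisfies the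
permutation functional equation
`Γ(ε₁, M) · Γ(ε₂, M − ε₁) = Γ(ε₂, M) · Γ(ε₁, M − ε₂)`,
then `Γ(ε, M) = exp (f (M − ε) − f M + h ε)` for some continuously
differentiable functions `f, h : ℝ → ℝ`. -/
theorem tunneling_functional_equation_solution
    (Γ : ℝ × ℝ → ℝ)
    (hpos : ∀ p, 0 < Γ p)
    (hsmooth : ContDiff ℝ 1 Γ)
    (hfe : ∀ ε₁ ε₂ M : ℝ,
      Γ (ε₁, M) * Γ (ε₂, M - ε₁) = Γ (ε₂, M) * Γ (ε₁, M - ε₂)) :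
    ∃ f h : ℝ → ℝ, ContDiff ℝ 1 f ∧ ContDiff ℝ 1 h ∧
      ∀ ε M : ℝ, Γ (ε, M) = Real.exp (f (M - ε) - f M + h ε) := by
  obtain ⟨g, hg⟩ : ∃ g : ℝ × ℝ → ℝ, g = fun p => Real.log (Γ p) := ⟨_, rfl⟩
  have hgs : ContDiff ℝ 1 g := by
    rw [hg]; exact hsmooth.log (fun p => (hpos p).ne')
  have hge : ∀ a b M : ℝ, g (a, M) + g (b, M - a) = g (b, M) + g (a, M - b) := by
    intro a b M
    simp only [hg]
    rw [← Real.log_mul (hpos _).ne' (hpos _).ne', ← Real.log_mul (hpos _).ne' (hpos _).ne',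
      hfe]
  have hd : ∀ p, HasFDerivAt g (fderiv ℝ g p) p := fun p =>
    ((hgs.differentiable one_ne_zero) p).hasFDerivAt
  have h1 : ∀ x M : ℝ, HasDerivAt (fun b => g (b, M)) (fderiv ℝ g (x, M) (1, 0)) x := by
    intro x M
    exact (hd (x, M)).comp_hasDerivAt x ((hasDerivAt_id x).prodMk (hasDerivAt_const x M))
  have h2 : ∀ a x : ℝ, HasDerivAt (fun M => g (a, M)) (fderiv ℝ g (a, x) (0, 1)) x := by
    intro a x
    exact (hd (a, x)).comp_hasDerivAt x ((hasDerivAt_const x a).prodMk (hasDerivAt_id x))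
  obtain ⟨φ, hφ⟩ : ∃ φ : ℝ → ℝ, φ = fun M => fderiv ℝ g (0, M) (1, 0) := ⟨_, rfl⟩
  have hφc : Continuous φ := by
    rw [hφ]
    have := hgs.continuous_fderiv one_ne_zero
    fun_prop
  have key : ∀ a M : ℝ, fderiv ℝ g (a, M) (0, 1) = φ M - φ (M - a) := by
    intro a M
    have e1 : HasDerivAt (fun b => g (a, M) + g (b, M - a)) (φ (M - a)) 0 := by
      rw [hφ]; exact (h1 0 (M - a)).const_add _
    have h2' : HasDerivAt (fun M => g (a, M)) (fderiv ℝ g (a, M) (0, 1)) (M - 0) := by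
      rw [sub_zero]; exact h2 a M
    have e2 : HasDerivAt (fun b => g (b, M) + g (a, M - b))
        (φ M + -fderiv ℝ g (a, M) (0, 1)) 0 := by
      rw [hφ]; exact (h1 0 M).add (h2'.comp_const_sub M 0)
    have e3 : (fun b => g (a, M) + g (b, M - a)) = fun b => g (b, M) + g (a, M - b) :=
      funext fun b => hge a b M
    rw [e3] at e1
    linarith [e1.unique e2]
  obtain ⟨f, hf⟩ : ∃ f : ℝ → ℝ, f = fun M => -∫ t in (0 : ℝ)..M, φ t := ⟨_, rfl⟩
  have hfd : ∀ x, HasDerivAt f (-φ x) x := by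
    intro x
    rw [hf]
    exact (hφc.integral_hasStrictDerivAt 0 x).hasDerivAt.neg
  have hfs : ContDiff ℝ 1 f := by
    rw [contDiff_one_iff_deriv]
    refine ⟨fun x => (hfd x).differentiableAt, ?_⟩
    rw [show deriv f = fun x => -φ x from funext fun x => (hfd x).deriv]
    exact hφc.neg
  refine ⟨f, fun a => g (a, 0) - f (0 - a) + f 0, hfs, ?_, ?_⟩
  · have i1 : ContDiff ℝ 1 (fun a : ℝ => g (a, 0)) :=
      hgs.comp (contDiff_id.prodMk contDiff_const)
    have i2 : ContDiff ℝ 1 (fun a : ℝ => f (0 - a)) :=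
      hfs.comp (contDiff_const.sub contDiff_id)
    exact (i1.sub i2).add contDiff_const
  · intro a M
    have hk : ∀ x, HasDerivAt (fun M => g (a, M) - f (M - a) + f M) 0 x := by
      intro x
      have := ((h2 a x).sub ((hfd (x - a)).comp_sub_const x a)).add (hfd x)
      rw [key] at this
      exact this.congr_deriv (by ring)
    have hc := is_const_of_deriv_eq_zero (fun x => (hk x).differentiableAt)
      (fun x => (hk x).deriv) M 0
    have hG : Γ (a, M) = Real.exp (g (a, M)) := by
      rw [hg]; exact (Real.exp_log (hpos _)).symm
    rw [hG]
    congr 1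
    linarith
end

section
/- Let γ : ℝ × ℝ → ℝ be continuously differentiable and suppose γ(ε₁, M − ε₂) + γ(ε₂, M) = γ(ε₂, M − ε₁) + γ(ε₁, M) for all real ε₁, ε₂, M. Then for all real ε and M, the partial derivative of γ with respect to its second argument satisfies ∂γ/∂M (ε, M) = ∂γ/∂ε (0, M) − ∂γ/∂ε (0, M − ε), where ∂γ/∂ε denotes the partial derivative with respect to the first argument. -/
/-- **Differentiation step in the proof of Theorem 1.**
If `γ : ℝ × ℝ → ℝ` is continuously differentiable and satisfies the additive
functional equation `γ(ε₁, M − ε₂) + γ(ε₂, M) = γ(ε₂, M − ε₁) + γ(ε₁, M)`,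
then `∂γ/∂M (ε, M) = ∂γ/∂ε (0, M) − ∂γ/∂ε (0, M − ε)`.
Here `∂γ/∂ε` is the derivative in the direction `(1, 0)` (first argument) and
`∂γ/∂M` the derivative in the direction `(0, 1)` (second argument). -/
theorem additive_fe_partial_derivative_relation
    (γ : ℝ × ℝ → ℝ)
    (hsmooth : ContDiff ℝ 1 γ)
    (hfe : ∀ ε₁ ε₂ M : ℝ,
      γ (ε₁, M - ε₂) + γ (ε₂, M) = γ (ε₂, M - ε₁) + γ (ε₁, M)) :
    ∀ ε M : ℝ,
      fderiv ℝ γ (ε, M) (0, 1)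
        = fderiv ℝ γ (0, M) (1, 0) - fderiv ℝ γ (0, M - ε) (1, 0) := by
  intro ε M
  have hd : Differentiable ℝ γ := hsmooth.differentiable (by norm_num)
  have hid : HasDerivAt (fun t : ℝ => t) 1 0 := hasDerivAt_id 0
  have h1 : HasDerivAt (fun t : ℝ => γ (ε, M - t)) (fderiv ℝ γ (ε, M) (0, -1)) 0 := by
    have hp : HasDerivAt (fun t : ℝ => (ε, M - t)) ((0 : ℝ), (-1 : ℝ)) 0 :=
      (hasDerivAt_const (0 : ℝ) ε).prodMk (hid.const_sub M)
    have hg : HasFDerivAt γ (fderiv ℝ γ (ε, M)) (ε, M - 0) := by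
      rw [sub_zero]
      exact (hd (ε, M)).hasFDerivAt
    exact hg.comp_hasDerivAt (0 : ℝ) hp
  have h2 : ∀ N : ℝ, HasDerivAt (fun t : ℝ => γ (t, N)) (fderiv ℝ γ (0, N) (1, 0)) 0 := by
    intro N
    have hp : HasDerivAt (fun t : ℝ => (t, N)) ((1 : ℝ), (0 : ℝ)) 0 :=
      hid.prodMk (hasDerivAt_const (0 : ℝ) N)
    exact (hd (0, N)).hasFDerivAt.comp_hasDerivAt (0 : ℝ) hp
  have hL := h1.add (h2 M)
  have hR := (h2 (M - ε)).add_const (γ (ε, M))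
  have hfun : ((fun t : ℝ => γ (ε, M - t)) + fun t : ℝ => γ (t, M))
      = fun t : ℝ => γ (t, M - ε) + γ (ε, M) := by
    funext t
    exact hfe ε t M
  rw [hfun] at hL
  have key := hL.unique hR
  have hneg : fderiv ℝ γ (ε, M) (0, -1) = - fderiv ℝ γ (ε, M) (0, 1) := by
    rw [← map_neg]
    simp
  linarith
end

section
/- Let Γ : ℝ × ℝ → (0, ∞) be continuously differentiable and satisfy Γ(ε₁, M) · Γ(ε₂, M − ε₁) = Γ(ε₁ + ε₂, M) for all real ε₁, ε₂, M. Then there exists a function f : ℝ → ℝ such that Γ(ε, M) = exp(f(M − ε) − f(M)) for all real ε, M. -/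
/-- **General solution of the sequential-emission functional equation.**
If `Γ : ℝ × ℝ → (0, ∞)` is continuously differentiable and satisfies
`Γ(ε₁, M) · Γ(ε₂, M − ε₁) = Γ(ε₁ + ε₂, M)` for all `ε₁, ε₂, M`, then
`Γ(ε, M) = exp (f (M − ε) − f M)` for some function `f : ℝ → ℝ`. -/
theorem sequential_emission_solution
    (Γ : ℝ × ℝ → ℝ)
    (hpos : ∀ p, 0 < Γ p)
    (hsmooth : ContDiff ℝ 1 Γ)
    (hseq : ∀ ε₁ ε₂ M : ℝ,
      Γ (ε₁, M) * Γ (ε₂, M - ε₁) = Γ (ε₁ + ε₂, M)) :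
    ∃ f : ℝ → ℝ, ∀ ε M : ℝ, Γ (ε, M) = Real.exp (f (M - ε) - f M) := by
  -- Take `f x = log Γ(-x, 0)`: emission from the zero-mass reference point.
  refine ⟨fun x => Real.log (Γ (-x, 0)), fun ε M => ?_⟩
  have h := hseq (-M) ε 0
  rw [show (0 : ℝ) - -M = M by ring, show -M + ε = -(M - ε) by ring] at h
  rw [Real.exp_sub, Real.exp_log (hpos _), Real.exp_log (hpos _), ← h]
  rw [mul_div_cancel_left₀ _ (hpos _).ne']
end

section
/- Let n ≥ 1 and let Γ : ℝⁿ × ℝⁿ → (0, ∞) be twice continuously differentiable and satisfy the multivariate permutation functional equation Γ(x, X) · Γ(x′, X − x) = Γ(x′, X) · Γ(x, X − x′) for all x, x′, X ∈ ℝⁿ. Then there exist continuously differentiable functions f : ℝⁿ → ℝ and h : ℝⁿ → ℝ such that Γ(x, X) = exp(f(X − x) − f(X) + h(x)) for all x, X ∈ ℝⁿ. -/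
/-- **Theorem 3 (multivariate case).**
Let `n ≥ 1` and let `Γ : ℝⁿ × ℝⁿ → (0, ∞)` be twice continuously
differentiable and satisfy the multivariate permutation functional equation
`Γ(x, X) · Γ(x′, X − x) = Γ(x′, X) · Γ(x, X − x′)`.  Then
`Γ(x, X) = exp (f (X − x) − f X + h x)` for some continuously differentiable
`f, h : ℝⁿ → ℝ`. -/
theorem multivariate_tunneling_functional_equation_solution
    (n : ℕ) (hn : 1 ≤ n)
    (Γ : (Fin n → ℝ) × (Fin n → ℝ) → ℝ)
    (hpos : ∀ p, 0 < Γ p)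
    (hsmooth : ContDiff ℝ 2 Γ)
    (hfe : ∀ x x' X : Fin n → ℝ,
      Γ (x, X) * Γ (x', X - x) = Γ (x', X) * Γ (x, X - x')) :
    ∃ f h : (Fin n → ℝ) → ℝ, ContDiff ℝ 1 f ∧ ContDiff ℝ 1 h ∧
      ∀ x X : Fin n → ℝ, Γ (x, X) = Real.exp (f (X - x) - f X + h x) := by
  classical
  set g : (Fin n → ℝ) × (Fin n → ℝ) → ℝ := fun p => Real.log (Γ p) with hg
  have hgC : ContDiff ℝ 2 g := hsmooth.log (fun p => (hpos p).ne')
  have hge : ∀ x x' X : Fin n → ℝ, g (x, X) + g (x', X - x) = g (x', X) + g (x, X - x') := by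
    intro x x' X
    simp only [hg]
    rw [← Real.log_mul (hpos _).ne' (hpos _).ne', ← Real.log_mul (hpos _).ne' (hpos _).ne',
      hfe x x' X]
  have hgd : ∀ p, HasFDerivAt g (fderiv ℝ g p) p := fun p =>
    (hgC.differentiable (by norm_num) p).hasFDerivAt
  have hg1 : ContDiff ℝ 1 (fderiv ℝ g) := hgC.fderiv_right (by norm_num)
  have hgd2 : ∀ p, HasFDerivAt (fderiv ℝ g) (fderiv ℝ (fderiv ℝ g) p) p := fun p =>
    (hg1.differentiable (by norm_num) p).hasFDerivAt
  set A : (Fin n → ℝ) → ((Fin n → ℝ) →L[ℝ] ℝ) := fun X =>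
    (fderiv ℝ g (0, X)).comp (ContinuousLinearMap.inl ℝ (Fin n → ℝ) (Fin n → ℝ)) with hA
  have hAC : ContDiff ℝ 1 A := by
    have h0 : ContDiff ℝ 1 (fun X : Fin n → ℝ => fderiv ℝ g (0, X)) :=
      hg1.comp (contDiff_const.prodMk contDiff_id)
    exact h0.clm_comp contDiff_const
  have hAd : ∀ X, HasFDerivAt A (fderiv ℝ A X) X := fun X =>
    (hAC.differentiable (by norm_num) X).hasFDerivAt
  have hl : ∀ x X : Fin n → ℝ, HasFDerivAt (fun y : Fin n → ℝ => (y, X))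
      (ContinuousLinearMap.inl ℝ (Fin n → ℝ) (Fin n → ℝ)) x := fun x X =>
    hasFDerivAt_prodMk_left x X
  have hr : ∀ x X : Fin n → ℝ, HasFDerivAt (fun y : Fin n → ℝ => (x, y))
      (ContinuousLinearMap.inr ℝ (Fin n → ℝ) (Fin n → ℝ)) X := fun x X =>
    hasFDerivAt_prodMk_right x X
  -- first order identity
  have key : ∀ x X v : Fin n → ℝ, fderiv ℝ g (x, X) (0, v) = A X v - A (X - x) v := by
    intro x X v
    have hs : HasFDerivAt (fun y : Fin n → ℝ => X - y)
        (-(ContinuousLinearMap.id ℝ (Fin n → ℝ))) 0 := (hasFDerivAt_id _).const_sub X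
    have hq : HasFDerivAt (fun y : Fin n → ℝ => g (x, X - y))
        (((fderiv ℝ g (x, X - 0)).comp (ContinuousLinearMap.inr ℝ (Fin n → ℝ) (Fin n → ℝ))).comp
          (-(ContinuousLinearMap.id ℝ (Fin n → ℝ)))) 0 :=
      HasFDerivAt.comp (g := fun z : Fin n → ℝ => g (x, z)) (0 : Fin n → ℝ)
        (HasFDerivAt.comp (X - 0) (hgd (x, X - 0)) (hr x (X - 0))) hs
    have h1 : HasFDerivAt (fun y : Fin n → ℝ => g (y, X)) (A X) 0 := by
      have := HasFDerivAt.comp (0 : Fin n → ℝ) (hgd (0, X)) (hl 0 X)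
      exact this
    have h2 : HasFDerivAt (fun y : Fin n → ℝ => g (y, X - x)) (A (X - x)) 0 := by
      have := HasFDerivAt.comp (0 : Fin n → ℝ) (hgd (0, X - x)) (hl 0 (X - x))
      exact this
    have h3 := h2.sub h1
    have h4 := hq.sub_const (g (x, X))
    have he : (fun y : Fin n → ℝ => g (x, X - y) - g (x, X)) =
        (fun y : Fin n → ℝ => g (y, X - x)) - (fun y : Fin n → ℝ => g (y, X)) := by
      funext y
      have := hge x y X
      simp only [Pi.sub_apply]
      linarith
    rw [he] at h4
    have h5 := congrArg (fun L : (Fin n → ℝ) →L[ℝ] ℝ => L v) (h3.unique h4)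
    simp only [sub_zero, ContinuousLinearMap.sub_apply, ContinuousLinearMap.comp_apply,
      ContinuousLinearMap.neg_apply, ContinuousLinearMap.id_apply, map_neg,
      ContinuousLinearMap.inr_apply] at h5
    linarith
  -- symmetry of the derivative of `A`
  have hsym : ∀ X u v : Fin n → ℝ, fderiv ℝ A X u v = fderiv ℝ A X v u := by
    intro X u v
    have hS : IsSymmSndFDerivAt ℝ g (0, X) :=
      hgC.contDiffAt.isSymmSndFDerivAt (by simp)
    have e1 : fderiv ℝ (fderiv ℝ g) (0, X) (u, 0) (0, v) = fderiv ℝ A X u v := by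
      have h1 : HasFDerivAt (fun y : Fin n → ℝ => fderiv ℝ g (y, X))
          ((fderiv ℝ (fderiv ℝ g) (0, X)).comp
            (ContinuousLinearMap.inl ℝ (Fin n → ℝ) (Fin n → ℝ))) 0 :=
        HasFDerivAt.comp (0 : Fin n → ℝ) (hgd2 (0, X)) (hl 0 X)
      have h2 := h1.clm_apply (hasFDerivAt_const ((0, v) : (Fin n → ℝ) × (Fin n → ℝ)) 0)
      have hs : HasFDerivAt (fun y : Fin n → ℝ => X - y)
          (-(ContinuousLinearMap.id ℝ (Fin n → ℝ))) 0 := (hasFDerivAt_id _).const_sub X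
      have h3 : HasFDerivAt (fun y : Fin n → ℝ => A (X - y))
          ((fderiv ℝ A (X - 0)).comp (-(ContinuousLinearMap.id ℝ (Fin n → ℝ)))) 0 :=
        HasFDerivAt.comp (0 : Fin n → ℝ) (hAd (X - 0)) hs
      have h4 := (h3.clm_apply (hasFDerivAt_const v 0)).const_sub (A X v)
      simp only [key] at h2
      have h5 := congrArg (fun L : (Fin n → ℝ) →L[ℝ] ℝ => L u) (h2.unique h4)
      simpa using h5
    have e2 : fderiv ℝ (fderiv ℝ g) (0, X) (0, v) (u, 0) = fderiv ℝ A X v u := by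
      have h1 : HasFDerivAt (fun y : Fin n → ℝ => fderiv ℝ g (0, y))
          ((fderiv ℝ (fderiv ℝ g) (0, X)).comp
            (ContinuousLinearMap.inr ℝ (Fin n → ℝ) (Fin n → ℝ))) X :=
        HasFDerivAt.comp X (hgd2 (0, X)) (hr 0 X)
      have h2 := h1.clm_apply (hasFDerivAt_const ((u, 0) : (Fin n → ℝ) × (Fin n → ℝ)) X)
      have h4 : HasFDerivAt (fun y : Fin n → ℝ => fderiv ℝ g (0, y) (u, 0)) _ X :=
        (hAd X).clm_apply (hasFDerivAt_const u X)
      have h5 := congrArg (fun L : (Fin n → ℝ) →L[ℝ] ℝ => L v) (h2.unique h4)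
      simpa using h5
    rw [← e1, ← e2]
    exact hS _ _
  obtain ⟨F, hF⟩ := convex_univ.exists_forall_hasFDerivAt_of_fderiv_symmetric isOpen_univ
    (hAC.differentiable (by norm_num)).differentiableOn (fun a _ x y => hsym a x y)
  have hFd : ∀ X, HasFDerivAt F (A X) X := fun X => hF X (Set.mem_univ X)
  have hFC : ContDiff ℝ 1 F := contDiff_one_iff_hasFDerivAt.2 ⟨A, hAC.continuous, hFd⟩
  refine ⟨fun X => - F X, fun x => g (x, 0) - F 0 + F (0 - x), hFC.neg, ?_, ?_⟩
  · have h0 : ContDiff ℝ 1 (fun x : Fin n → ℝ => g (x, 0)) :=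
      (hgC.of_le (by norm_num)).comp (contDiff_id.prodMk contDiff_const)
    exact (h0.sub contDiff_const).add (hFC.comp (contDiff_const.sub contDiff_id))
  · intro x X
    have hd : ∀ Y, HasFDerivAt (fun Y : Fin n → ℝ => g (x, Y) - F Y + F (Y - x))
        (0 : (Fin n → ℝ) →L[ℝ] ℝ) Y := by
      intro Y
      have h1 : HasFDerivAt (fun Y : Fin n → ℝ => g (x, Y))
          ((fderiv ℝ g (x, Y)).comp (ContinuousLinearMap.inr ℝ (Fin n → ℝ) (Fin n → ℝ))) Y :=
        HasFDerivAt.comp Y (hgd (x, Y)) (hr x Y)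
      have h2 : HasFDerivAt (fun Y : Fin n → ℝ => F (Y - x))
          ((A (Y - x)).comp (ContinuousLinearMap.id ℝ (Fin n → ℝ))) Y :=
        HasFDerivAt.comp Y (hFd (Y - x)) ((hasFDerivAt_id Y).sub_const x)
      refine ((h1.sub (hFd Y)).add h2).congr_fderiv ?_
      refine ContinuousLinearMap.ext fun v => ?_
      have := key x Y v
      simp only [ContinuousLinearMap.add_apply, ContinuousLinearMap.sub_apply,
        ContinuousLinearMap.comp_apply, ContinuousLinearMap.inr_apply,
        ContinuousLinearMap.id_apply, ContinuousLinearMap.zero_apply]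
      linarith
    have hc := is_const_of_fderiv_eq_zero (𝕜 := ℝ) (fun Y => (hd Y).differentiableAt)
      (fun Y => (hd Y).fderiv) X 0
    have hx : -F (X - x) - -F X + (g (x, 0) - F 0 + F (0 - x)) = g (x, X) := by
      linarith
    show Γ (x, X) = Real.exp (-F (X - x) - -F X + (g (x, 0) - F 0 + F (0 - x)))
    rw [hx]
    exact (Real.exp_log (hpos _)).symm
end

section
/- Let n ≥ 1 and let γ : ℝⁿ × ℝⁿ → ℝ be continuously differentiable and satisfy γ(x, X) + γ(x′, X − x) = γ(x′, X) + γ(x, X − x′) for all x, x′, X ∈ ℝⁿ. Then for every index i ∈ {1, …, n} and all x, X ∈ ℝⁿ, ∂γ/∂Xᵢ (x, X) = ∂γ/∂xᵢ (0, X) − ∂γ/∂xᵢ (0, X − x), where ∂γ/∂xᵢ denotes the partial derivative in the i-th coordinate of the first (vector) argument and ∂γ/∂Xᵢ the partial derivative in the i-th coordinate of the second (vector) argument. -/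
/-- **Differentiation step in the proof of Theorem 3.**
If `γ : ℝⁿ × ℝⁿ → ℝ` is continuously differentiable and satisfies the additive
functional equation `γ(x, X) + γ(x′, X − x) = γ(x′, X) + γ(x, X − x′)`, then
for every coordinate `i`,
`∂γ/∂Xᵢ (x, X) = ∂γ/∂xᵢ (0, X) − ∂γ/∂xᵢ (0, X − x)`.
Partial derivatives are expressed as directional derivatives along the
coordinate directions `(0, Pi.single i 1)` (second argument) and
`(Pi.single i 1, 0)` (first argument). -/
theorem multivariate_additive_fe_partial_derivative_relation
    (n : ℕ) (hn : 1 ≤ n)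
    (γ : (Fin n → ℝ) × (Fin n → ℝ) → ℝ)
    (hsmooth : ContDiff ℝ 1 γ)
    (hfe : ∀ x x' X : Fin n → ℝ,
      γ (x, X) + γ (x', X - x) = γ (x', X) + γ (x, X - x')) :
    ∀ (i : Fin n) (x X : Fin n → ℝ),
      fderiv ℝ γ (x, X) (0, Pi.single i 1)
        = fderiv ℝ γ (0, X) (Pi.single i 1, 0)
          - fderiv ℝ γ (0, X - x) (Pi.single i 1, 0) := by
  intro i x X
  have hd : Differentiable ℝ γ := hsmooth.differentiable (by norm_num)
  have key : ∀ p v, HasDerivAt (fun t : ℝ => γ (p + t • v)) (fderiv ℝ γ p v) 0 :=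
    fun p v => (hd p).hasFDerivAt.hasLineDerivAt v
  have h1 := key (0, X - x) (Pi.single i 1, 0)
  have h2 := key (0, X) (Pi.single i 1, 0)
  have h3 := key (x, X) (-(0, Pi.single i 1))
  have h4 := h2.add h3
  have h5 := h1.const_add (γ (x, X))
  have h6 := h5.unique (h4.congr_of_eventuallyEq (Filter.Eventually.of_forall fun t => by
    have := hfe x (t • Pi.single i 1) X
    simpa [sub_eq_add_neg] using this))
  rw [map_neg] at h6
  linarith
end

section
/- Let n ≥ 2 and let h : ℝⁿ × ℝⁿ⁻¹ → ℝ be twice continuously differentiable, where the first argument is written x = (x₁, …, xₙ) with truncation x̂ = (x₁, …, xₙ₋₁) and the second argument is X̂ = (X₁, …, Xₙ₋₁). Suppose that for each i ∈ {1, …, n−1} and all (x, X̂), ∂h/∂Xᵢ (x, X̂) = ∂h/∂xᵢ (0, X̂) − ∂h/∂xᵢ (0, X̂ − x̂). Then there exist functions u : ℝⁿ → ℝ and w : ℝⁿ⁻¹ × ℝⁿ⁻¹ → ℝ such that h(x, X̂) = u(x) + w(x̂, X̂) for all x ∈ ℝⁿ and X̂ ∈ ℝⁿ⁻¹. -/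
/-- **Dimensional-reduction step in the proof of Theorem 3.**
Let `n ≥ 2` and let `h : ℝⁿ × ℝⁿ⁻¹ → ℝ` be twice continuously differentiable,
where for `x = (x₁, …, xₙ) ∈ ℝⁿ` we write `x̂ = (x₁, …, xₙ₋₁) ∈ ℝⁿ⁻¹` for its
truncation.  Suppose that for each `i ∈ {1, …, n−1}` and all `(x, X̂)`,
`∂h/∂Xᵢ (x, X̂) = ∂h/∂xᵢ (0, X̂) − ∂h/∂xᵢ (0, X̂ − x̂)`.
Then `h (x, X̂) = u x + w (x̂, X̂)` for some `u : ℝⁿ → ℝ` and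
`w : ℝⁿ⁻¹ × ℝⁿ⁻¹ → ℝ`. -/
theorem dimensional_reduction_split
    (n : ℕ) (hn : 2 ≤ n)
    (h : (Fin n → ℝ) × (Fin (n - 1) → ℝ) → ℝ)
    (hsmooth : ContDiff ℝ 2 h)
    (trunc : (Fin n → ℝ) → (Fin (n - 1) → ℝ))
    (htrunc : ∀ (x : Fin n → ℝ) (i : Fin (n - 1)),
      trunc x i = x (Fin.castLE (Nat.sub_le n 1) i))
    (hpde : ∀ (i : Fin (n - 1)) (x : Fin n → ℝ) (X : Fin (n - 1) → ℝ),
      fderiv ℝ h (x, X) (0, Pi.single i 1)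
        = fderiv ℝ h (0, X) (Pi.single (Fin.castLE (Nat.sub_le n 1) i) 1, 0)
          - fderiv ℝ h (0, X - trunc x)
              (Pi.single (Fin.castLE (Nat.sub_le n 1) i) 1, 0)) :
    ∃ (u : (Fin n → ℝ) → ℝ) (w : (Fin (n - 1) → ℝ) × (Fin (n - 1) → ℝ) → ℝ),
      ∀ (x : Fin n → ℝ) (X : Fin (n - 1) → ℝ),
        h (x, X) = u x + w (trunc x, X) := by
  have hd : Differentiable ℝ h := hsmooth.differentiable (by norm_num)
  have hD : ∀ (x : Fin n → ℝ) (X : Fin (n - 1) → ℝ),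
      HasFDerivAt (fun X => h (x, X))
        ((fderiv ℝ h (x, X)).comp (ContinuousLinearMap.inr ℝ (Fin n → ℝ) (Fin (n - 1) → ℝ))) X :=
    fun x X => (hd (x, X)).hasFDerivAt.comp X (hasFDerivAt_prodMk_right x X)
  have key : ∀ (x y : Fin n → ℝ), trunc x = trunc y → ∀ X : Fin (n - 1) → ℝ,
      h (x, X) - h (y, X) = h (x, 0) - h (y, 0) := by
    intro x y hxy X
    have hg := fun X => (hD x X).sub (hD y X)
    refine is_const_of_fderiv_eq_zero (𝕜 := ℝ) (f := (fun X => h (x, X)) - (fun X => h (y, X)))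
      (fun X => (hg X).differentiableAt) (fun X => ?_) X 0
    rw [(hg X).fderiv]
    apply ContinuousLinearMap.coe_injective
    apply LinearMap.pi_ext'
    intro i
    ext
    have h1 := hpde i x X
    have h2 := hpde i y X
    rw [hxy, ← h2] at h1
    simp [h1]
  let ext : (Fin (n - 1) → ℝ) → (Fin n → ℝ) :=
    fun y j => if hj : j.1 < n - 1 then y ⟨j.1, hj⟩ else 0
  have hext : ∀ y, trunc (ext y) = y := by
    intro y
    funext i
    rw [htrunc]
    simp [ext]
  refine ⟨fun x => h (x, 0), fun p => h (ext p.1, p.2) - h (ext p.1, 0), fun x X => ?_⟩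
  have := key x (ext (trunc x)) (hext _).symm X
  simp only
  linarith
end
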